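/- Let φ : F → G be a morphism of functors of Artin rings with G a deformation functor. (a) If φ is smooth, then for every relative obstruction theory (V, v_e) for φ, all the relative obstruction maps v_e are identically zero. (b) Conversely, if φ admits a complete relative obstruction theory all of whose maps are identically zero, then φ is smooth. -/

import Mathlib

open CategoryTheory

universe u

/-- The category `Art_K` of commutative local Artinian `K`-algebras with residue field `K`. -/
structure ArtinAlg (K : Type u) [Field K] : Type (u + 1) where
  carrier : Type u
  [commRing : CommRing carrier]
  [algebra : Algebra K carrier]
  [artinian : IsArtinianRing carrier]
  [localRing : IsLocalRing carrier]
  residue_bij : Function.Bijective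
    ((IsLocalRing.residue carrier).comp (algebraMap K carrier))

attribute [instance] ArtinAlg.commRing ArtinAlg.algebra ArtinAlg.artinian ArtinAlg.localRing

instance (K : Type u) [Field K] : CoeSort (ArtinAlg K) (Type u) :=
  ⟨ArtinAlg.carrier⟩

instance (K : Type u) [Field K] : Category (ArtinAlg K) where
  Hom A B := A.carrier →ₐ[K] B.carrier
  id A := AlgHom.id K A.carrier
  comp f g := g.comp f

/-- Morphisms in `Art_K` are `K`-algebra homomorphisms. -/
def ArtinAlg.Hom.toAlgHom {K : Type u} [Field K] {A B : ArtinAlg K} (f : A ⟶ B) :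
    A.carrier →ₐ[K] B.carrier := f

instance {K : Type u} [Field K] {A B : ArtinAlg K} : FunLike (A ⟶ B) A B :=
  inferInstanceAs (FunLike (A.carrier →ₐ[K] B.carrier) A B)

instance {K : Type u} [Field K] {A B : ArtinAlg K} : AlgHomClass (A ⟶ B) K A B :=
  inferInstanceAs (AlgHomClass (A.carrier →ₐ[K] B.carrier) K A B)

/-- The field `K` itself, as the (terminal/initial) object of `Art_K`. -/
def ArtinAlg.self (K : Type u) [Field K] : ArtinAlg K where
  carrier := K
  residue_bij := by
    constructor
    · exact RingHom.injective _
    · intro y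
      obtain ⟨x, hx⟩ := Ideal.Quotient.mk_surjective (I := IsLocalRing.maximalIdeal K) y
      exact ⟨x, hx⟩

/-- A functor of Artin rings: a covariant functor `F : Art_K ⥤ Set` with `F(K)` a one-point
set. -/
def IsFunctorOfArtinRings {K : Type u} [Field K] (F : ArtinAlg K ⥤ Type u) : Prop :=
  Nonempty (F.obj (ArtinAlg.self K)) ∧ Subsingleton (F.obj (ArtinAlg.self K))

/-- Smoothness of a functor of Artin rings: `F(B) → F(A)` is surjective for every surjection
`B → A` in `Art_K`. -/
def IsSmoothFunctor {K : Type u} [Field K] (F : ArtinAlg K ⥤ Type u) : Prop :=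
  ∀ (B A : ArtinAlg K) (f : B ⟶ A), Function.Surjective f → Function.Surjective (F.map f)

/-- Smoothness of a morphism of functors of Artin rings: for every surjection `B → A` in
`Art_K` the induced map `F(B) → G(B) ×_{G(A)} F(A)` is surjective. -/
def IsSmoothMorphism {K : Type u} [Field K] {F G : ArtinAlg K ⥤ Type u} (φ : F ⟶ G) : Prop :=
  ∀ (B A : ArtinAlg K) (f : B ⟶ A), Function.Surjective f →
    ∀ (gb : G.obj B) (fa : F.obj A), G.map f gb = φ.app A fa →
      ∃ fb : F.obj B, φ.app B fb = gb ∧ F.map f fb = fa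
/-- A small extension `e : 0 → J → B → A → 0` in `Art_K`: a surjection `π : B → A` whose
kernel `J` is annihilated by the maximal ideal `m_B`. -/
structure SmallExtension (K : Type u) [Field K] where
  B : ArtinAlg K
  A : ArtinAlg K
  π : B ⟶ A
  surj : Function.Surjective π
  small : ∀ x : B, π x = 0 → ∀ y ∈ IsLocalRing.maximalIdeal B.carrier, y * x = 0

/-- The kernel `J` of a small extension, as a `K`-vector space. -/
def SmallExtension.J {K : Type u} [Field K] (e : SmallExtension K) :
    Submodule K e.B.carrier :=
  Submodule.restrictScalars K (RingHom.ker (ArtinAlg.Hom.toAlgHom e.π).toRingHom)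

/-- The map induced on the kernels by a morphism of small extensions. -/
def SmallExtension.kerMap {K : Type u} [Field K] {e₁ e₂ : SmallExtension K}
    (αB : e₁.B ⟶ e₂.B) (αA : e₁.A ⟶ e₂.A) (hc : αB ≫ e₂.π = e₁.π ≫ αA) :
    e₁.J →ₗ[K] e₂.J where
  toFun x := ⟨αB x.1, by
    have hx : e₁.π x.1 = 0 := by
      have hx0 := x.2
      simp only [SmallExtension.J, Submodule.restrictScalars_mem, RingHom.mem_ker] at hx0
      exact hx0
    have h' : e₂.π (αB x.1) = αA (e₁.π x.1) := DFunLike.congr_fun hc x.1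
    simp only [SmallExtension.J, Submodule.restrictScalars_mem, RingHom.mem_ker]
    show e₂.π (αB x.1) = 0
    rw [h', hx, map_zero]⟩
  map_add' x y := by
    ext
    exact map_add (ArtinAlg.Hom.toAlgHom αB) x.1 y.1
  map_smul' c x := by
    ext
    exact map_smul (ArtinAlg.Hom.toAlgHom αB).toLinearMap c x.1

/-- An obstruction theory `(V, v_e)` for a functor of Artin rings `F`. -/
structure ObstructionTheory {K : Type u} [Field K] (F : ArtinAlg K ⥤ Type u) :
    Type (u + 1) where
  V : Type u
  [addCommGroup : AddCommGroup V]
  [module : Module K V]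
  ob : ∀ e : SmallExtension K, F.obj e.A → TensorProduct K V e.J
  ob_eq_zero_of_lifts : ∀ (e : SmallExtension K) (a : F.obj e.A),
    (∃ b : F.obj e.B, F.map e.π b = a) → ob e a = 0
  base_change : ∀ (e₁ e₂ : SmallExtension K) (αB : e₁.B ⟶ e₂.B) (αA : e₁.A ⟶ e₂.A)
    (hc : αB ≫ e₂.π = e₁.π ≫ αA) (a : F.obj e₁.A),
    ob e₂ (F.map αA a) = LinearMap.lTensor V (SmallExtension.kerMap αB αA hc) (ob e₁ a)

attribute [instance] ObstructionTheory.addCommGroup ObstructionTheory.module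

/-- Completeness of an obstruction theory: an element lifts iff its obstruction vanishes. -/
def ObstructionTheory.Complete {K : Type u} [Field K] {F : ArtinAlg K ⥤ Type u}
    (OT : ObstructionTheory F) : Prop :=
  ∀ (e : SmallExtension K) (a : F.obj e.A), OT.ob e a = 0 → ∃ b : F.obj e.B, F.map e.π b = a
/-- `(D, p, q)` realizes the fiber product `B ×_A C` in `Art_K` (stated concretely on
underlying algebras). -/
structure IsFiberProductCone {K : Type u} [Field K] {A B C D : ArtinAlg K}
    (f : B ⟶ A) (g : C ⟶ A) (p : D ⟶ B) (q : D ⟶ C) : Prop where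
  comm : ∀ d : D, f (p d) = g (q d)
  inj : ∀ d₁ d₂ : D, p d₁ = p d₂ → q d₁ = q d₂ → d₁ = d₂
  surj : ∀ (b : B) (c : C), f b = g c → ∃ d : D, p d = b ∧ q d = c

/-- A deformation functor: a functor of Artin rings such that the natural map
`η : F(B ×_A C) → F(B) ×_{F(A)} F(C)` is surjective whenever `B → A` is surjective, and
bijective whenever `A = K`. -/
structure IsDeformationFunctor {K : Type u} [Field K] (F : ArtinAlg K ⥤ Type u) : Prop where
  nonempty_pt : Nonempty (F.obj (ArtinAlg.self K))
  subsingleton_pt : Subsingleton (F.obj (ArtinAlg.self K))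
  eta_surjective : ∀ {A B C D : ArtinAlg K} (f : B ⟶ A) (g : C ⟶ A) (p : D ⟶ B) (q : D ⟶ C),
    IsFiberProductCone f g p q → Function.Surjective f →
    ∀ (x : F.obj B) (y : F.obj C), F.map f x = F.map g y →
      ∃ d : F.obj D, F.map p d = x ∧ F.map q d = y
  eta_bijective : ∀ {B C D : ArtinAlg K} (f : B ⟶ ArtinAlg.self K)
    (g : C ⟶ ArtinAlg.self K) (p : D ⟶ B) (q : D ⟶ C),
    IsFiberProductCone f g p q →
    ∀ (x : F.obj B) (y : F.obj C), F.map f x = F.map g y →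
      ∃! d : F.obj D, F.map p d = x ∧ F.map q d = y
lemma SmallExtension.rel_compat {K : Type u} [Field K] {F G : ArtinAlg K ⥤ Type u}
    (φ : F ⟶ G) {e₁ e₂ : SmallExtension K} (αB : e₁.B ⟶ e₂.B) (αA : e₁.A ⟶ e₂.A)
    (hc : αB ≫ e₂.π = e₁.π ≫ αA) (a : F.obj e₁.A) (β : G.obj e₁.B)
    (h : G.map e₁.π β = φ.app e₁.A a) :
    G.map e₂.π (G.map αB β) = φ.app e₂.A (F.map αA a) := by
  have h1 : G.map e₂.π (G.map αB β) = G.map αA (G.map e₁.π β) := by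
    rw [← FunctorToTypes.map_comp_apply, ← FunctorToTypes.map_comp_apply, hc]
  rw [h1, h]
  exact (NatTrans.naturality_apply φ αA a).symm

/-- A relative obstruction theory `(V, v_e)` for a morphism `φ : F → G` of functors of Artin
rings: for every small extension `e : 0 → J → B → A → 0`, a map
`v_e : F(A) ×_{G(A)} G(B) → V ⊗_K J` vanishing on pairs that lift to `F(B)` and compatible
with base change along morphisms of small extensions. -/
structure RelObstructionTheory {K : Type u} [Field K] {F G : ArtinAlg K ⥤ Type u}
    (φ : F ⟶ G) : Type (u + 1) where
  V : Type u
  [addCommGroup : AddCommGroup V]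
  [module : Module K V]
  ob : ∀ (e : SmallExtension K) (a : F.obj e.A) (β : G.obj e.B),
    G.map e.π β = φ.app e.A a → TensorProduct K V e.J
  ob_eq_zero_of_lifts : ∀ (e : SmallExtension K) (a : F.obj e.A) (β : G.obj e.B)
    (h : G.map e.π β = φ.app e.A a),
    (∃ b : F.obj e.B, F.map e.π b = a ∧ φ.app e.B b = β) → ob e a β h = 0
  base_change : ∀ (e₁ e₂ : SmallExtension K) (αB : e₁.B ⟶ e₂.B) (αA : e₁.A ⟶ e₂.A)
    (hc : αB ≫ e₂.π = e₁.π ≫ αA) (a : F.obj e₁.A) (β : G.obj e₁.B)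
    (h : G.map e₁.π β = φ.app e₁.A a),
    ob e₂ (F.map αA a) (G.map αB β) (SmallExtension.rel_compat φ αB αA hc a β h) =
      LinearMap.lTensor V (SmallExtension.kerMap αB αA hc) (ob e₁ a β h)

attribute [instance] RelObstructionTheory.addCommGroup RelObstructionTheory.module

/-- Completeness of a relative obstruction theory. -/
def RelObstructionTheory.Complete {K : Type u} [Field K] {F G : ArtinAlg K ⥤ Type u}
    {φ : F ⟶ G} (ROT : RelObstructionTheory φ) : Prop :=
  ∀ (e : SmallExtension K) (a : F.obj e.A) (β : G.obj e.B)
    (h : G.map e.π β = φ.app e.A a), ROT.ob e a β h = 0 →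
    ∃ b : F.obj e.B, F.map e.π b = a ∧ φ.app e.B b = β

/-!
Smoothness of `φ` says that pairs `(a, β) ∈ F(A) ×_{G(A)} G(B)` lift to `F(B)` along every
surjection `B → A`; for small extensions, a complete relative obstruction theory that vanishes
provides these lifts. They exist along `g ∘ f` as soon as they exist along `f` and `g`, and every
surjection `f : B → A` is a composite of small extensions: the factorization
`B → B/(𝔪 · ker f) → A` ends with a small extension, and the kernel `𝔪 · ker f` of its first map
is killed by one power of the nilpotent ideal `𝔪` fewer than `ker f`.
-/

theorem residue_comp_algebraMap_surjective_of_surjective {K R S : Type*} [CommSemiring K]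
    [CommRing R] [IsLocalRing R] [Algebra K R] [CommRing S] [IsLocalRing S] [Algebra K S]
    (f : R →ₐ[K] S) (hf : Function.Surjective f)
    (hR : Function.Surjective ((IsLocalRing.residue R).comp (algebraMap K R))) :
    Function.Surjective ((IsLocalRing.residue S).comp (algebraMap K S)) := by
  intro y
  obtain ⟨s, rfl⟩ := IsLocalRing.residue_surjective y
  obtain ⟨r, rfl⟩ := hf s
  obtain ⟨k, hk⟩ := hR (IsLocalRing.residue R r)
  have : IsLocalHom (f : R →+* S) := .of_surjective _ hf
  refine ⟨k, ?_⟩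
  simpa using congrArg (IsLocalRing.ResidueField.map (f : R →+* S)) hk

namespace ArtinAlg

open IsLocalRing

variable {K : Type u} [Field K] {A B : ArtinAlg K}

/-- The quotient of an object of `Art_K` by a proper ideal. -/
def quotient (B : ArtinAlg K) (I : Ideal B) (hI : I ≠ ⊤) : ArtinAlg K :=
  haveI : Nontrivial (B ⧸ I) := Ideal.Quotient.nontrivial_iff.mpr hI
  haveI : IsLocalRing (B ⧸ I) := .of_surjective' _ Ideal.Quotient.mk_surjective
  { carrier := B ⧸ I
    residue_bij := ⟨RingHom.injective _, residue_comp_algebraMap_surjective_of_surjective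
      (Ideal.Quotient.mkₐ K I) Ideal.Quotient.mk_surjective B.residue_bij.surjective⟩ }

/-- The projection `B → B/I` as a morphism of `Art_K`. -/
def quotientMk (B : ArtinAlg K) (I : Ideal B) (hI : I ≠ ⊤) : B ⟶ B.quotient I hI :=
  Ideal.Quotient.mkₐ K I

/-- The morphism `B/I → A` of `Art_K` induced by a morphism `f : B → A` that kills `I`. -/
def quotientLift (f : B ⟶ A) (I : Ideal B) (hI : I ≠ ⊤) (hf : I ≤ RingHom.ker f) :
    B.quotient I hI ⟶ A :=
  Ideal.Quotient.liftₐ I (Hom.toAlgHom f) hf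

section Quotient

variable {I : Ideal B} (hI : I ≠ ⊤)

theorem quotientMk_surjective : Function.Surjective (B.quotientMk I hI) :=
  Ideal.Quotient.mk_surjective

theorem ker_quotientMk : RingHom.ker (B.quotientMk I hI) = I :=
  Ideal.mk_ker

theorem quotientMk_comp_quotientLift (f : B ⟶ A) (hf : I ≤ RingHom.ker f) :
    B.quotientMk I hI ≫ quotientLift f I hI hf = f :=
  rfl

theorem quotientLift_surjective {f : B ⟶ A} (hf : I ≤ RingHom.ker f)
    (hsurj : Function.Surjective f) : Function.Surjective (quotientLift f I hI hf) :=
  Ideal.Quotient.lift_surjective_of_surjective I hf hsurj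

theorem ker_quotientLift (f : B ⟶ A) (hf : I ≤ RingHom.ker f) :
    RingHom.ker (quotientLift f I hI hf) = (RingHom.ker f).map (B.quotientMk I hI) :=
  Ideal.ker_quotient_lift (Hom.toAlgHom f : B →+* A) hf

theorem map_quotientMk_maximalIdeal :
    (maximalIdeal B).map (B.quotientMk I hI) = maximalIdeal (B.quotient I hI) :=
  map_maximalIdeal_of_surjective _ (quotientMk_surjective hI)

theorem map_quotientMk_self : I.map (B.quotientMk I hI) = ⊥ :=
  Ideal.map_quotient_self I

end Quotient

theorem maximalIdeal_mul_ker_ne_top (f : B ⟶ A) : maximalIdeal B * RingHom.ker f ≠ ⊤ :=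
  fun h => RingHom.ker_ne_top f (top_le_iff.mp (h ▸ Ideal.mul_le_right))

theorem maximalIdeal_mul_ker_quotientLift_eq_bot (f : B ⟶ A) :
    maximalIdeal (B.quotient _ (maximalIdeal_mul_ker_ne_top f)) *
      RingHom.ker (quotientLift f _ (maximalIdeal_mul_ker_ne_top f) Ideal.mul_le_right) = ⊥ := by
  rw [ker_quotientLift, ← map_quotientMk_maximalIdeal, ← Ideal.map_mul, map_quotientMk_self]

section Devissage

variable {P : MorphismProperty (ArtinAlg K)}

theorem prop_of_maximalIdeal_mul_ker_eq_bot (hP : ∀ e : SmallExtension K, P e.π)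
    (f : B ⟶ A) (hf : Function.Surjective f) (hker : maximalIdeal B * RingHom.ker f = ⊥) : P f :=
  hP ⟨B, A, f, hf, fun _ hx _ hy => Ideal.mem_bot.mp (hker ▸ Ideal.mul_mem_mul hy hx)⟩

variable [P.IsStableUnderComposition]

theorem prop_of_maximalIdeal_pow_mul_ker_eq_bot (hP : ∀ e : SmallExtension K, P e.π) (n : ℕ)
    (f : B ⟶ A) (hf : Function.Surjective f)
    (hker : maximalIdeal B ^ n * RingHom.ker f = ⊥) : P f := by
  induction n generalizing A with
  | zero =>
    rw [pow_zero, one_mul] at hker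
    exact prop_of_maximalIdeal_mul_ker_eq_bot hP f hf (by rw [hker, Ideal.mul_bot])
  | succ n ih =>
    have hI := maximalIdeal_mul_ker_ne_top f
    have h_mk : P (B.quotientMk _ hI) := by
      refine ih _ (quotientMk_surjective hI) ?_
      rw [ker_quotientMk, ← mul_assoc, ← pow_succ, hker]
    have h_lift : P (quotientLift f _ hI Ideal.mul_le_right) :=
      prop_of_maximalIdeal_mul_ker_eq_bot hP _ (quotientLift_surjective hI _ hf)
        (maximalIdeal_mul_ker_quotientLift_eq_bot f)
    exact quotientMk_comp_quotientLift hI f _ ▸ P.comp_mem _ _ h_mk h_lift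

theorem prop_of_surjective (hP : ∀ e : SmallExtension K, P e.π) (f : B ⟶ A)
    (hf : Function.Surjective f) : P f := by
  obtain ⟨n, hn⟩ := (isArtinianRing_iff_isNilpotent_maximalIdeal B).mp inferInstance
  exact prop_of_maximalIdeal_pow_mul_ker_eq_bot hP n f hf (by rw [hn, zero_mul, Ideal.zero_eq_bot])

end Devissage

end ArtinAlg

section RelLifting

universe w

/-- The morphisms `f : B ⟶ A` along which a natural transformation `φ : F ⟶ G` of set-valued
functors has the relative lifting property: `F(B) → G(B) ×_{G(A)} F(A)` is surjective. -/
def relLifting {C : Type*} [Category* C] {F G : C ⥤ Type w} (φ : F ⟶ G) : MorphismProperty C :=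
  fun B A f => ∀ (β : G.obj B) (a : F.obj A), G.map f β = φ.app A a →
    ∃ b : F.obj B, φ.app B b = β ∧ F.map f b = a

instance {C : Type*} [Category* C] {F G : C ⥤ Type w} (φ : F ⟶ G) :
    (relLifting φ).IsStableUnderComposition where
  comp_mem f g hf hg β a h := by
    rw [Functor.map_comp_apply] at h
    obtain ⟨b, hb, rfl⟩ := hg (G.map f β) a h
    obtain ⟨c, hc, rfl⟩ := hf β b hb.symm
    exact ⟨c, hc, Functor.map_comp_apply F f g c⟩

end RelLifting

section Smooth

variable {K : Type u} [Field K] {F G : ArtinAlg K ⥤ Type u} {φ : F ⟶ G}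

theorem isSmoothMorphism_iff_forall_smallExtension :
    IsSmoothMorphism φ ↔ ∀ e : SmallExtension K, relLifting φ e.π :=
  ⟨fun hφ e => hφ e.B e.A e.π e.surj, fun h _ _ f hf => ArtinAlg.prop_of_surjective h f hf⟩

theorem RelObstructionTheory.ob_eq_zero_of_isSmoothMorphism (ROT : RelObstructionTheory φ)
    (hφ : IsSmoothMorphism φ) (e : SmallExtension K) (a : F.obj e.A) (β : G.obj e.B)
    (h : G.map e.π β = φ.app e.A a) : ROT.ob e a β h = 0 :=
  have ⟨b, hb, hba⟩ := isSmoothMorphism_iff_forall_smallExtension.mp hφ e β a h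
  ROT.ob_eq_zero_of_lifts e a β h ⟨b, hba, hb⟩

theorem RelObstructionTheory.Complete.isSmoothMorphism {ROT : RelObstructionTheory φ}
    (hROT : ROT.Complete)
    (h_ob : ∀ (e : SmallExtension K) (a : F.obj e.A) (β : G.obj e.B)
      (h : G.map e.π β = φ.app e.A a), ROT.ob e a β h = 0) : IsSmoothMorphism φ :=
  isSmoothMorphism_iff_forall_smallExtension.mpr fun e β a h =>
    have ⟨b, hba, hb⟩ := hROT e a β h (h_ob e a β h)
    ⟨b, hb, hba⟩

end Smooth

theorem smoothMorphism_iff_relObstruction_vanish_general {K : Type u} [Field K]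
    {F G : ArtinAlg K ⥤ Type u} (φ : F ⟶ G) :
    (IsSmoothMorphism φ →
      ∀ (ROT : RelObstructionTheory φ) (e : SmallExtension K) (a : F.obj e.A)
        (β : G.obj e.B) (h : G.map e.π β = φ.app e.A a), ROT.ob e a β h = 0) ∧
    ((∃ ROT : RelObstructionTheory φ, ROT.Complete ∧
        ∀ (e : SmallExtension K) (a : F.obj e.A) (β : G.obj e.B)
          (h : G.map e.π β = φ.app e.A a), ROT.ob e a β h = 0) →
      IsSmoothMorphism φ) :=
  ⟨fun hφ ROT => ROT.ob_eq_zero_of_isSmoothMorphism hφ,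
    fun ⟨_, hROT, h_ob⟩ => hROT.isSmoothMorphism h_ob⟩

/-- Let `φ : F → G` be a morphism of functors of Artin rings with `G` a
deformation functor. (a) If `φ` is smooth, then every relative obstruction theory for `φ` has
all its obstruction maps identically zero. (b) Conversely, if `φ` admits a complete relative
obstruction theory all of whose maps are identically zero, then `φ` is smooth. -/
theorem smoothMorphism_iff_relObstruction_vanish {K : Type u} [Field K]
    {F G : ArtinAlg K ⥤ Type u} (hF : IsFunctorOfArtinRings F)
    (hG : IsDeformationFunctor G) (φ : F ⟶ G) :
    (IsSmoothMorphism φ →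
      ∀ (ROT : RelObstructionTheory φ) (e : SmallExtension K) (a : F.obj e.A)
        (β : G.obj e.B) (h : G.map e.π β = φ.app e.A a), ROT.ob e a β h = 0) ∧
    ((∃ ROT : RelObstructionTheory φ, ROT.Complete ∧
        ∀ (e : SmallExtension K) (a : F.obj e.A) (β : G.obj e.B)
          (h : G.map e.π β = φ.app e.A a), ROT.ob e a β h = 0) →
      IsSmoothMorphism φ) :=
  smoothMorphism_iff_relObstruction_vanish_general φ
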